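/- Let C be a regular Ord-category and R ↣ X×Y a relation with legs r₁, r₂. Then R^* := (r₁)_*∘(r₂)^* is the smallest ideal containing the opposite relation R°: one has R° ⊆ R^*, R^* ≅ I_X∘R°∘I_Y, and any ideal containing R° contains R^*. -/

import Mathlib

open CategoryTheory

universe w v u

/-- An `Ord`-enrichment of a category: a preorder on each hom-set,
preserved by composition on both sides. -/
class OrdEnrichment (C : Type u) [Category.{v} C] : Type (max u v) where
  ord : ∀ {X Y : C}, (X ⟶ Y) → (X ⟶ Y) → Prop
  ord_refl : ∀ {X Y : C} (f : X ⟶ Y), ord f f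
  ord_trans : ∀ {X Y : C} {f g h : X ⟶ Y}, ord f g → ord g h → ord f h
  precomp_ord : ∀ {X Y Z : C} (e : X ⟶ Y) {f g : Y ⟶ Z}, ord f g → ord (e ≫ f) (e ≫ g)
  postcomp_ord : ∀ {X Y Z : C} {f g : X ⟶ Y} (h : Y ⟶ Z), ord f g → ord (f ≫ h) (g ≫ h)

/-- The preorder on hom-sets of an `Ord`-category. -/
def homLe {C : Type u} [Category.{v} C] [OrdEnrichment C] {X Y : C} (f g : X ⟶ Y) : Prop :=
  OrdEnrichment.ord f g

infixl:50 " ≼ " => homLe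

section

variable {C : Type u} [Category.{v} C] [OrdEnrichment C]

/-- A full (ff-) morphism. -/
def IsFF {X Y : C} (m : X ⟶ Y) : Prop :=
  ∀ {A : C} (a a' : A ⟶ X), (a ≫ m) ≼ (a' ≫ m) → a ≼ a'

/-- An ff-monomorphism: a full monomorphism. -/
def IsFFMono {X Y : C} (m : X ⟶ Y) : Prop := IsFF m ∧ Mono m

/-- An so-morphism: a morphism left orthogonal to every ff-monomorphism. -/
def IsSO {A B : C} (e : A ⟶ B) : Prop :=
  ∀ {X Y : C} (m : X ⟶ Y), IsFFMono m → ∀ (u : A ⟶ X) (v : B ⟶ Y),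
    u ≫ m = e ≫ v → ∃ d : B ⟶ X, e ≫ d = u ∧ d ≫ m = v

/-- The (strict) comma object square for the ordered pair `(f, g)`. -/
structure IsCommaSq {X Y Z : C} (f : X ⟶ Y) (g : Z ⟶ Y) (P : C)
    (π₁ : P ⟶ X) (π₂ : P ⟶ Z) : Prop where
  le : (π₁ ≫ f) ≼ (π₂ ≫ g)
  lift : ∀ {A : C} (α : A ⟶ X) (β : A ⟶ Z), (α ≫ f) ≼ (β ≫ g) →
    ∃! h : A ⟶ P, h ≫ π₁ = α ∧ h ≫ π₂ = β
  lift_ord : ∀ {A : C} {h h' : A ⟶ P}, (h ≫ π₁) ≼ (h' ≫ π₁) → (h ≫ π₂) ≼ (h' ≫ π₂) → h ≼ h'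

/-- A 2-pullback square (pullback with the `Ord`-enriched universal property). -/
structure Is2Pullback {X Y Z : C} (f : X ⟶ Z) (g : Y ⟶ Z) (P : C)
    (p : P ⟶ X) (q : P ⟶ Y) : Prop where
  comm : p ≫ f = q ≫ g
  lift : ∀ {A : C} (a : A ⟶ X) (b : A ⟶ Y), a ≫ f = b ≫ g →
    ∃! h : A ⟶ P, h ≫ p = a ∧ h ≫ q = b
  lift_ord : ∀ {A : C} {h h' : A ⟶ P}, (h ≫ p) ≼ (h' ≫ p) → (h ≫ q) ≼ (h' ≫ q) → h ≼ h'

/-- A binary 2-product. -/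
structure Is2Product (X Y : C) (P : C) (p : P ⟶ X) (q : P ⟶ Y) : Prop where
  lift : ∀ {A : C} (a : A ⟶ X) (b : A ⟶ Y), ∃! h : A ⟶ P, h ≫ p = a ∧ h ≫ q = b
  lift_ord : ∀ {A : C} {h h' : A ⟶ P}, (h ≫ p) ≼ (h' ≫ p) → (h ≫ q) ≼ (h' ≫ q) → h ≼ h'

/-- A 2-equalizer. -/
structure Is2Equalizer {X Y : C} (f g : X ⟶ Y) (E : C) (i : E ⟶ X) : Prop where
  comm : i ≫ f = i ≫ g
  lift : ∀ {A : C} (a : A ⟶ X), a ≫ f = a ≫ g → ∃! h : A ⟶ E, h ≫ i = a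
  lift_ord : ∀ {A : C} {h h' : A ⟶ E}, (h ≫ i) ≼ (h' ≫ i) → h ≼ h'

/-- A bicoinserter of a parallel pair. -/
structure IsBicoinserter {X A E : C} (a b : X ⟶ A) (e : A ⟶ E) : Prop where
  le : (a ≫ e) ≼ (b ≫ e)
  desc : ∀ {F : C} (f : A ⟶ F), (a ≫ f) ≼ (b ≫ f) →
    ∃ t : E ⟶ F, (e ≫ t) ≼ f ∧ f ≼ (e ≫ t)
  desc_ord : ∀ {F : C} {f f' : A ⟶ F} {t t' : E ⟶ F},
    (e ≫ t) ≼ f → f ≼ (e ≫ t) → (e ≫ t') ≼ f' → f' ≼ (e ≫ t') → f ≼ f' → t ≼ t'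

/-- A relation from `X` to `Y` in an `Ord`-category: a jointly ff-monomorphic span. -/
structure RelStr (X Y : C) : Type (max u v) where
  obj : C
  p : obj ⟶ X
  q : obj ⟶ Y
  jointly_ff : ∀ {A : C} (a a' : A ⟶ obj), (a ≫ p) ≼ (a' ≫ p) → (a ≫ q) ≼ (a' ≫ q) → a ≼ a'
  jointly_mono : ∀ {A : C} (a a' : A ⟶ obj), a ≫ p = a' ≫ p → a ≫ q = a' ≫ q → a = a'

/-- `(x, y) ∈_A R`. -/
def RelStr.Mem {X Y : C} (R : RelStr X Y) {A : C} (x : A ⟶ X) (y : A ⟶ Y) : Prop :=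
  ∃ h : A ⟶ R.obj, h ≫ R.p = x ∧ h ≫ R.q = y

/-- `R ⊆ S`: `R` factors through `S` (over `X × Y`). -/
def RelStr.Sub {X Y : C} (R S : RelStr X Y) : Prop :=
  ∃ φ : R.obj ⟶ S.obj, φ ≫ S.p = R.p ∧ φ ≫ S.q = R.q

/-- `R ≅ S`: mutual factorisation. -/
def RelStr.Iso {X Y : C} (R S : RelStr X Y) : Prop := R.Sub S ∧ S.Sub R

/-- The opposite relation `R°`. -/
def RelStr.op {X Y : C} (R : RelStr X Y) : RelStr Y X where
  obj := R.obj
  p := R.q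
  q := R.p
  jointly_ff := fun a a' h1 h2 => R.jointly_ff a a' h2 h1
  jointly_mono := fun a a' h1 h2 => R.jointly_mono a a' h2 h1

/-- A relation is an (order) ideal when it is closed under lowering the first
coordinate and raising the second coordinate. -/
def IsIdealRel {X Y : C} (R : RelStr X Y) : Prop :=
  ∀ {A : C} (x x' : A ⟶ X) (y y' : A ⟶ Y), x' ≼ x → R.Mem x y → y ≼ y' → R.Mem x' y'

/-- The relation `f_♯` given by the span `(1_X, f)`. -/
def sharpRel {X Y : C} (f : X ⟶ Y) : RelStr X Y where
  obj := X
  p := 𝟙 X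
  q := f
  jointly_ff := fun a a' h1 _ => by simpa using h1
  jointly_mono := fun a a' h1 _ => by simpa using h1

/-- The relation `f°`, the opposite of `f_♯`. -/
def cosharpRel {X Y : C} (f : X ⟶ Y) : RelStr Y X := (sharpRel f).op

/-- `M` is the meet (intersection) `R ∧ S` of two relations. -/
def IsMeetRel {X Y : C} (R S M : RelStr X Y) : Prop :=
  M.Sub R ∧ M.Sub S ∧
    ∀ {A : C} (x : A ⟶ X) (y : A ⟶ Y), R.Mem x y → S.Mem x y → M.Mem x y

/-- `T` is the composite `S ∘ R` of the relations `R : X ↬ Y` and `S : Y ↬ Z`,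
obtained via the (so-morphism, ff-monomorphism) factorisation of the span
given by the 2-pullback over the middle object. -/
def IsCompositeRel {X Y Z : C} (R : RelStr X Y) (S : RelStr Y Z) (T : RelStr X Z) : Prop :=
  ∃ (P : C) (p₁ : P ⟶ R.obj) (p₂ : P ⟶ S.obj) (e : P ⟶ T.obj),
    Is2Pullback R.q S.p P p₁ p₂ ∧ IsSO e ∧ e ≫ T.p = p₁ ≫ R.p ∧ e ≫ T.q = p₂ ≫ S.q

/-- `R` is the ideal `f_* = f / 1_Y : X ↬ Y`. -/
def IsStarRel {X Y : C} (f : X ⟶ Y) (R : RelStr X Y) : Prop :=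
  IsCommaSq f (𝟙 Y) R.obj R.p R.q

/-- `R` is the ideal `f^* = 1_Y / f : Y ↬ X`. -/
def IsCostarRel {X Y : C} (f : X ⟶ Y) (R : RelStr Y X) : Prop :=
  IsCommaSq (𝟙 Y) f R.obj R.p R.q

/-- `R` is the identity ideal `I_X = 1_X / 1_X`. -/
def IsIdRel (X : C) (R : RelStr X X) : Prop :=
  IsCommaSq (𝟙 X) (𝟙 X) R.obj R.p R.q

/-- `S` is the 2-pullback of the relation `R ↣ X × Y` along `f × g`. -/
def IsRelPullback {X Y U V : C} (R : RelStr X Y) (f : U ⟶ X) (g : V ⟶ Y)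
    (S : RelStr U V) : Prop :=
  ∃ h : S.obj ⟶ R.obj, h ≫ R.p = S.p ≫ f ∧ h ≫ R.q = S.q ≫ g ∧
    ∀ {A : C} (a : A ⟶ U) (b : A ⟶ V) (c : A ⟶ R.obj),
      c ≫ R.p = a ≫ f → c ≫ R.q = b ≫ g →
      ∃ d : A ⟶ S.obj, d ≫ S.p = a ∧ d ≫ S.q = b ∧ d ≫ h = c

/-- A binary 2-coproduct. -/
structure Is2Coproduct (X Y : C) (P : C) (i : X ⟶ P) (j : Y ⟶ P) : Prop where
  desc : ∀ {A : C} (a : X ⟶ A) (b : Y ⟶ A), ∃! h : P ⟶ A, i ≫ h = a ∧ j ≫ h = b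
  desc_ord : ∀ {A : C} {h h' : P ⟶ A}, (i ≫ h) ≼ (i ≫ h') → (j ≫ h) ≼ (j ≫ h') → h ≼ h'

/-- A ternary 2-coproduct. -/
structure Is3Coproduct (X Y Z : C) (P : C) (i : X ⟶ P) (j : Y ⟶ P) (k : Z ⟶ P) : Prop where
  desc : ∀ {A : C} (a : X ⟶ A) (b : Y ⟶ A) (c : Z ⟶ A),
    ∃! h : P ⟶ A, i ≫ h = a ∧ j ≫ h = b ∧ k ≫ h = c
  desc_ord : ∀ {A : C} {h h' : P ⟶ A},
    (i ≫ h) ≼ (i ≫ h') → (j ≫ h) ≼ (j ≫ h') → (k ≫ h) ≼ (k ≫ h') → h ≼ h'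

/-- Reflexivity of a relation on `X`: the diagonal factors through it. -/
def ReflexiveRel {X : C} (R : RelStr X X) : Prop := R.Mem (𝟙 X) (𝟙 X)

/-- Transitivity of a relation on `X`: `R ∘ R ⊆ R`. -/
def TransitiveRel {X : C} (R : RelStr X X) : Prop :=
  ∀ T : RelStr X X, IsCompositeRel R R T → T.Sub R

/-- A congruence: a reflexive and transitive ideal. -/
def IsCongruence {X : C} (R : RelStr X X) : Prop :=
  IsIdealRel R ∧ ReflexiveRel R ∧ TransitiveRel R

/-- An effective congruence: `R ≅ f^* ∘ f_*` for some morphism `f`. -/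
def EffectiveCongruence {X : C} (R : RelStr X X) : Prop :=
  ∃ (Y : C) (f : X ⟶ Y) (Fstar : RelStr X Y) (Fco : RelStr Y X) (T : RelStr X X),
    IsStarRel f Fstar ∧ IsCostarRel f Fco ∧ IsCompositeRel Fstar Fco T ∧ R.Iso T

/-- The `Ord`-enriched difunctionality property of a relation. -/
def OrdDifunctional {X Y : C} (D : RelStr X Y) : Prop :=
  ∀ {A : C} (x u u' : A ⟶ X) (y y' v : A ⟶ Y),
    D.Mem x y → y ≼ y' → D.Mem u y' → u ≼ u' → D.Mem u' v → D.Mem x v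

end

/-- A regular `Ord`-category: finite weighted limits, an
(so-morphism, ff-monomorphism) factorisation system, so-morphisms stable under
2-pullbacks, and every so-morphism the bicoinserter of its comma object projections. -/
structure IsRegularOrd (C : Type u) [Category.{v} C] [OrdEnrichment C] : Prop where
  hasTerminal : ∃ T : C, ∀ A : C, ∃ f : A ⟶ T, ∀ g : A ⟶ T, g = f
  has2Products : ∀ X Y : C, ∃ (P : C) (p : P ⟶ X) (q : P ⟶ Y), Is2Product X Y P p q
  has2Equalizers : ∀ {X Y : C} (f g : X ⟶ Y), ∃ (E : C) (i : E ⟶ X), Is2Equalizer f g E i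
  has2Pullbacks : ∀ {X Y Z : C} (f : X ⟶ Z) (g : Y ⟶ Z),
    ∃ (P : C) (p : P ⟶ X) (q : P ⟶ Y), Is2Pullback f g P p q
  hasCommaObjects : ∀ {X Y Z : C} (f : X ⟶ Y) (g : Z ⟶ Y),
    ∃ (P : C) (p : P ⟶ X) (q : P ⟶ Z), IsCommaSq f g P p q
  fact : ∀ {X Y : C} (f : X ⟶ Y), ∃ (I : C) (e : X ⟶ I) (m : I ⟶ Y),
    IsSO e ∧ IsFFMono m ∧ e ≫ m = f
  so_pullback_stable : ∀ {X Y Z P : C} (f : X ⟶ Z) (g : Y ⟶ Z) (p : P ⟶ X) (q : P ⟶ Y),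
    Is2Pullback f g P p q → IsSO g → IsSO p
  so_bicoinserter : ∀ {A B P : C} (e : A ⟶ B), IsSO e →
    ∀ (π₁ π₂ : P ⟶ A), IsCommaSq e e P π₁ π₂ → IsBicoinserter π₁ π₂ e

/-- An `Ord`-Mal'tsev category: every ideal is `Ord`-difunctional. -/
def IsOrdMaltsev (C : Type u) [Category.{v} C] [OrdEnrichment C] : Prop :=
  ∀ (X Y : C) (D : RelStr X Y), IsIdealRel D → OrdDifunctional D

/-- An `Ord`-W-Mal'tsev object: every ideal is `Ord`-difunctional with respect to
generalised elements with domain `Y`. -/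
def IsOrdWMaltsevObj {C : Type u} [Category.{v} C] [OrdEnrichment C] (Y : C) : Prop :=
  ∀ (X Z : C) (R : RelStr X Z), IsIdealRel R →
    ∀ (x u u' : Y ⟶ X) (z z' v : Y ⟶ Z),
      R.Mem x z → z ≼ z' → R.Mem u z' → u ≼ u' → R.Mem u' v → R.Mem x v

/-!
Relations are handled through their generalised elements. So-morphisms act as covers: by
orthogonality, membership in a relation may be checked after precomposing with an so-morphism, and
by pullback stability, `(x, z)` belongs to `S ∘ R` exactly when, after such a cover, some `y`
satisfies `(x, y) ∈ R` and `(y, z) ∈ S`. Read this way, `(r₁)_* ∘ (r₂)^*` and `I_X ∘ R° ∘ I_Y` have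
the same elements: the pairs `(y, x)` for which, on some cover, there is an element `r` of `R` with
`y ≼ r₂ r` and `r₁ r ≼ x`. This local condition describes the smallest ideal containing `R°`.
-/

/-- The fragment of regularity under which membership in relations is local for so-morphisms: binary
2-products, 2-pullbacks, and so-morphisms stable under 2-pullback. -/
structure HasStableSO (C : Type u) [Category.{v} C] [OrdEnrichment C] : Prop where
  has2Products : ∀ X Y : C, ∃ (P : C) (p : P ⟶ X) (q : P ⟶ Y), Is2Product X Y P p q
  has2Pullbacks : ∀ {X Y Z : C} (f : X ⟶ Z) (g : Y ⟶ Z),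
    ∃ (P : C) (p : P ⟶ X) (q : P ⟶ Y), Is2Pullback f g P p q
  so_pullback_stable : ∀ {X Y Z P : C} (f : X ⟶ Z) (g : Y ⟶ Z) (p : P ⟶ X) (q : P ⟶ Y),
    Is2Pullback f g P p q → IsSO g → IsSO p

section

variable {C : Type u} [Category.{v} C] [OrdEnrichment C]

theorem IsRegularOrd.hasStableSO (hC : IsRegularOrd C) : HasStableSO C where
  has2Products := hC.has2Products
  has2Pullbacks := hC.has2Pullbacks
  so_pullback_stable := hC.so_pullback_stable

namespace homLe

theorem refl {X Y : C} (f : X ⟶ Y) : f ≼ f := OrdEnrichment.ord_refl f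

theorem trans {X Y : C} {f g h : X ⟶ Y} (hfg : f ≼ g) (hgh : g ≼ h) : f ≼ h :=
  OrdEnrichment.ord_trans hfg hgh

theorem precomp {X Y Z : C} (e : X ⟶ Y) {f g : Y ⟶ Z} (h : f ≼ g) : (e ≫ f) ≼ (e ≫ g) :=
  OrdEnrichment.precomp_ord e h

theorem postcomp {X Y Z : C} {f g : X ⟶ Y} (h : f ≼ g) (k : Y ⟶ Z) : (f ≫ k) ≼ (g ≫ k) :=
  OrdEnrichment.postcomp_ord k h

end homLe

theorem IsSO.comp {A B D : C} {c : A ⟶ B} {d : B ⟶ D} (hc : IsSO c) (hd : IsSO d) :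
    IsSO (c ≫ d) := by
  intro X Y m hm u v huv
  obtain ⟨k, hck, hkm⟩ := hc m hm u (d ≫ v) (by rw [huv, Category.assoc])
  obtain ⟨l, hdl, hlm⟩ := hd m hm k v hkm
  exact ⟨l, by rw [Category.assoc, hdl, hck], hlm⟩

theorem IsSO.id (A : C) : IsSO (𝟙 A) :=
  fun _ _ u _ h => ⟨u, Category.id_comp u, by rw [h, Category.id_comp]⟩

theorem Is2Product.hom_ext {X Y P A : C} {p : P ⟶ X} {q : P ⟶ Y} (hP : Is2Product X Y P p q)
    {a b : A ⟶ P} (hp : a ≫ p = b ≫ p) (hq : a ≫ q = b ≫ q) : a = b :=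
  (hP.lift (b ≫ p) (b ≫ q)).unique ⟨hp, hq⟩ ⟨rfl, rfl⟩

theorem RelStr.isFFMono_of_comp_eq {X Y P : C} (R : RelStr X Y) {p : P ⟶ X} {q : P ⟶ Y}
    {m : R.obj ⟶ P} (hp : m ≫ p = R.p) (hq : m ≫ q = R.q) : IsFFMono m := by
  refine ⟨fun a a' h => R.jointly_ff a a' ?_ ?_, ⟨fun a a' h => R.jointly_mono a a' ?_ ?_⟩⟩
  · simpa only [Category.assoc, hp] using h.postcomp p
  · simpa only [Category.assoc, hq] using h.postcomp q
  · rw [← hp, reassoc_of% h]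
  · rw [← hq, reassoc_of% h]

theorem RelStr.Mem.precomp {X Y A B : C} {R : RelStr X Y} {x : A ⟶ X} {y : A ⟶ Y}
    (h : R.Mem x y) (c : B ⟶ A) : R.Mem (c ≫ x) (c ≫ y) := by
  obtain ⟨r, rfl, rfl⟩ := h
  exact ⟨c ≫ r, Category.assoc .., Category.assoc ..⟩

theorem RelStr.Mem.of_so_precomp (hC : HasStableSO C) {X Y A B : C} {R : RelStr X Y}
    {c : B ⟶ A} (hc : IsSO c) {x : A ⟶ X} {y : A ⟶ Y} (h : R.Mem (c ≫ x) (c ≫ y)) :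
    R.Mem x y := by
  obtain ⟨P, p, q, hP⟩ := hC.has2Products X Y
  obtain ⟨m, ⟨hmp, hmq⟩, -⟩ := hP.lift R.p R.q
  obtain ⟨xy, ⟨rfl, rfl⟩, -⟩ := hP.lift x y
  obtain ⟨r, hrp, hrq⟩ := h
  have square : r ≫ m = c ≫ xy := hP.hom_ext
    (by rw [Category.assoc, hmp, hrp, Category.assoc])
    (by rw [Category.assoc, hmq, hrq, Category.assoc])
  obtain ⟨d, -, rfl⟩ := hc m (R.isFFMono_of_comp_eq hmp hmq) r xy square
  exact ⟨d, by rw [Category.assoc, hmp], by rw [Category.assoc, hmq]⟩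

theorem RelStr.sub_of_forall_mem {X Y : C} {R S : RelStr X Y}
    (h : ∀ {A : C} (x : A ⟶ X) (y : A ⟶ Y), R.Mem x y → S.Mem x y) : R.Sub S :=
  h R.p R.q ⟨𝟙 _, Category.id_comp _, Category.id_comp _⟩

namespace IsCompositeRel

variable {X Y Z : C} {R : RelStr X Y} {S : RelStr Y Z} {T : RelStr X Z}

theorem mem_of_mem (hT : IsCompositeRel R S T) {A : C} {x : A ⟶ X} {y : A ⟶ Y} {z : A ⟶ Z}
    (hR : R.Mem x y) (hS : S.Mem y z) : T.Mem x z := by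
  obtain ⟨P, p₁, p₂, e, hP, -, hep, heq⟩ := hT
  obtain ⟨r, rfl, rfl⟩ := hR
  obtain ⟨s, hs, rfl⟩ := hS
  obtain ⟨k, ⟨rfl, rfl⟩, -⟩ := hP.lift r s hs.symm
  exact ⟨k ≫ e, by simp only [Category.assoc, hep], by simp only [Category.assoc, heq]⟩

theorem exists_so_of_mem (hC : HasStableSO C) (hT : IsCompositeRel R S T) {A : C} {x : A ⟶ X}
    {z : A ⟶ Z} (h : T.Mem x z) :
    ∃ (B : C) (c : B ⟶ A) (y : B ⟶ Y), IsSO c ∧ R.Mem (c ≫ x) y ∧ S.Mem y (c ≫ z) := by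
  obtain ⟨P, p₁, p₂, e, hP, he, hep, heq⟩ := hT
  obtain ⟨t, rfl, rfl⟩ := h
  obtain ⟨B, c, d, hB⟩ := hC.has2Pullbacks t e
  refine ⟨B, c, d ≫ p₁ ≫ R.q, hC.so_pullback_stable t e c d hB he,
    ⟨d ≫ p₁, ?_, Category.assoc ..⟩, ⟨d ≫ p₂, ?_, ?_⟩⟩
  · rw [Category.assoc, ← hep, reassoc_of% hB.comm]
  · rw [Category.assoc, hP.comm]
  · rw [Category.assoc, ← heq, reassoc_of% hB.comm]

theorem mem_iff (hC : HasStableSO C) (hT : IsCompositeRel R S T) {A : C} (x : A ⟶ X)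
    (z : A ⟶ Z) :
    T.Mem x z ↔
      ∃ (B : C) (c : B ⟶ A) (y : B ⟶ Y), IsSO c ∧ R.Mem (c ≫ x) y ∧ S.Mem y (c ≫ z) :=
  ⟨hT.exists_so_of_mem hC, fun ⟨_, _, _, hc, hR, hS⟩ => .of_so_precomp hC hc (hT.mem_of_mem hR hS)⟩

end IsCompositeRel

theorem IsCommaSq.mem_iff {X Y Z A : C} {f : X ⟶ Y} {g : Z ⟶ Y} {R : RelStr X Z}
    (hR : IsCommaSq f g R.obj R.p R.q) (x : A ⟶ X) (z : A ⟶ Z) :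
    R.Mem x z ↔ (x ≫ f) ≼ (z ≫ g) := by
  constructor
  · rintro ⟨r, rfl, rfl⟩
    simpa only [Category.assoc] using hR.le.precomp r
  · exact fun h => (hR.lift x z h).exists

theorem IsStarRel.mem_iff {X Y A : C} {f : X ⟶ Y} {R : RelStr X Y} (hR : IsStarRel f R)
    (x : A ⟶ X) (y : A ⟶ Y) : R.Mem x y ↔ (x ≫ f) ≼ y := by
  rw [IsCommaSq.mem_iff hR, Category.comp_id]

theorem IsCostarRel.mem_iff {X Y A : C} {f : X ⟶ Y} {R : RelStr Y X} (hR : IsCostarRel f R)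
    (y : A ⟶ Y) (x : A ⟶ X) : R.Mem y x ↔ y ≼ (x ≫ f) := by
  rw [IsCommaSq.mem_iff hR, Category.comp_id]

theorem IsIdRel.mem_iff {X A : C} {I : RelStr X X} (hI : IsIdRel X I) (x x' : A ⟶ X) :
    I.Mem x x' ↔ x ≼ x' := by
  rw [IsCommaSq.mem_iff hI, Category.comp_id, Category.comp_id]

variable {W X Y : C}

/-- The generalised elements of the ideal generated by a span `X ←f– W –g→ Y`: those pairs `(x, y)`
which, after precomposition with an so-morphism, satisfy `x ≼ f w` and `g w ≼ y` for some element
`w` of `W`. -/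
def SpanIdealMem (f : W ⟶ X) (g : W ⟶ Y) {A : C} (x : A ⟶ X) (y : A ⟶ Y) : Prop :=
  ∃ (B : C) (c : B ⟶ A) (w : B ⟶ W), IsSO c ∧ (c ≫ x) ≼ (w ≫ f) ∧ (w ≫ g) ≼ (c ≫ y)

/-- `T` is the smallest ideal through which the span `X ←f– W –g→ Y` factors. The span is not
assumed to be a relation; for the legs of a relation `R`, `T.Mem R.p R.q` unfolds to `R.Sub T`. -/
structure IsGeneratedIdeal (f : W ⟶ X) (g : W ⟶ Y) (T : RelStr X Y) : Prop where
  isIdealRel : IsIdealRel T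
  mem : T.Mem f g
  sub : ∀ J : RelStr X Y, IsIdealRel J → J.Mem f g → T.Sub J

namespace SpanIdealMem

variable {f : W ⟶ X} {g : W ⟶ Y}

theorem legs (f : W ⟶ X) (g : W ⟶ Y) : SpanIdealMem f g f g :=
  ⟨W, 𝟙 W, 𝟙 W, IsSO.id W, homLe.refl _, homLe.refl _⟩

theorem mono {A : C} {x x' : A ⟶ X} {y y' : A ⟶ Y} (hx : x' ≼ x) (h : SpanIdealMem f g x y)
    (hy : y ≼ y') : SpanIdealMem f g x' y' := by
  obtain ⟨B, c, w, hc, hxw, hwy⟩ := h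
  exact ⟨B, c, w, hc, (hx.precomp c).trans hxw, hwy.trans (hy.precomp c)⟩

theorem mem_of_isIdealRel (hC : HasStableSO C) {J : RelStr X Y} (hJ : IsIdealRel J)
    (hfg : J.Mem f g) {A : C} {x : A ⟶ X} {y : A ⟶ Y} (h : SpanIdealMem f g x y) :
    J.Mem x y := by
  obtain ⟨_, _, w, hc, hxw, hwy⟩ := h
  exact .of_so_precomp hC hc (hJ _ _ _ _ hxw (hfg.precomp w) hwy)

end SpanIdealMem

namespace IsGeneratedIdeal

variable {f : W ⟶ X} {g : W ⟶ Y} {S T : RelStr X Y}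

theorem iso (hS : IsGeneratedIdeal f g S) (hT : IsGeneratedIdeal f g T) : S.Iso T :=
  ⟨hS.sub T hT.isIdealRel hT.mem, hT.sub S hS.isIdealRel hS.mem⟩

theorem of_mem_iff (hC : HasStableSO C)
    (hT : ∀ {A : C} (x : A ⟶ X) (y : A ⟶ Y), T.Mem x y ↔ SpanIdealMem f g x y) :
    IsGeneratedIdeal f g T where
  isIdealRel x x' y y' hx h hy := (hT x' y').2 (.mono hx ((hT x y).1 h) hy)
  mem := (hT f g).2 (.legs f g)
  sub _ hJ hfg := RelStr.sub_of_forall_mem fun x y h => ((hT x y).1 h).mem_of_isIdealRel hC hJ hfg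

theorem of_costar_star (hC : HasStableSO C) {fco : RelStr X W} {gstar : RelStr W Y}
    (hf : IsCostarRel f fco) (hg : IsStarRel g gstar) (hT : IsCompositeRel fco gstar T) :
    IsGeneratedIdeal f g T := by
  refine of_mem_iff hC fun x y => ?_
  simp only [hT.mem_iff hC, hf.mem_iff, hg.mem_iff, SpanIdealMem]

theorem of_id_comp_id (hC : HasStableSO C) {R G : RelStr X Y} {IX : RelStr X X} {IY : RelStr Y Y}
    (hIX : IsIdRel X IX) (hIY : IsIdRel Y IY) (hG : IsCompositeRel IX R G)
    (hT : IsCompositeRel G IY T) : IsGeneratedIdeal R.p R.q T := by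
  refine of_mem_iff hC fun x y => ⟨fun h => ?_, ?_⟩
  · obtain ⟨B, c, y', hc, hGxy', hy'y⟩ := hT.exists_so_of_mem hC h
    obtain ⟨D, d, x', hd, hxx', r, rfl, hry'⟩ := hG.exists_so_of_mem hC hGxy'
    rw [hIX.mem_iff] at hxx'
    rw [hIY.mem_iff] at hy'y
    refine ⟨D, d ≫ c, r, hd.comp hc, ?_, ?_⟩
    · rwa [Category.assoc]
    · rw [hry', Category.assoc]
      exact hy'y.precomp d
  · rintro ⟨B, c, r, hc, hxr, hry⟩
    have hGxr : G.Mem (c ≫ x) (r ≫ R.q) :=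
      hG.mem_of_mem ((hIX.mem_iff _ _).2 hxr) ⟨r, rfl, rfl⟩
    exact .of_so_precomp hC hc (hT.mem_of_mem hGxr ((hIY.mem_iff _ _).2 hry))

end IsGeneratedIdeal

end

theorem statement6_general {C : Type u} [Category.{v} C] [OrdEnrichment C] (hC : HasStableSO C)
    {X Y : C} (R : RelStr X Y)
    (IX : RelStr X X) (hIX : IsIdRel X IX) (IY : RelStr Y Y) (hIY : IsIdRel Y IY)
    (R1star : RelStr R.obj X) (hR1star : IsStarRel R.p R1star)
    (R2co : RelStr Y R.obj) (hR2co : IsCostarRel R.q R2co)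
    (Rupper : RelStr Y X) (hRupper : IsCompositeRel R2co R1star Rupper)
    (G1 : RelStr Y X) (hG1 : IsCompositeRel IY R.op G1)
    (G2 : RelStr Y X) (hG2 : IsCompositeRel G1 IX G2) :
    IsIdealRel Rupper ∧
    R.op.Sub Rupper ∧
    Rupper.Iso G2 ∧
    (∀ J : RelStr Y X, IsIdealRel J → R.op.Sub J → Rupper.Sub J) := by
  have hUpper : IsGeneratedIdeal R.op.p R.op.q Rupper := .of_costar_star hC hR2co hR1star hRupper
  have hG : IsGeneratedIdeal R.op.p R.op.q G2 := .of_id_comp_id hC hIY hIX hG1 hG2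
  exact ⟨hUpper.isIdealRel, hUpper.mem, hUpper.iso hG, hUpper.sub⟩

/-- `R^* = (r₁)_* ∘ (r₂)^*` is the smallest ideal containing the opposite relation `R°`. -/
theorem statement6 {C : Type u} [Category.{v} C] [OrdEnrichment C] (hC : IsRegularOrd C)
    {X Y : C} (R : RelStr X Y)
    (IX : RelStr X X) (hIX : IsIdRel X IX) (IY : RelStr Y Y) (hIY : IsIdRel Y IY)
    (R1star : RelStr R.obj X) (hR1star : IsStarRel R.p R1star)
    (R2co : RelStr Y R.obj) (hR2co : IsCostarRel R.q R2co)
    (Rupper : RelStr Y X) (hRupper : IsCompositeRel R2co R1star Rupper)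
    (G1 : RelStr Y X) (hG1 : IsCompositeRel IY R.op G1)
    (G2 : RelStr Y X) (hG2 : IsCompositeRel G1 IX G2) :
    IsIdealRel Rupper ∧
    R.op.Sub Rupper ∧
    Rupper.Iso G2 ∧
    (∀ J : RelStr Y X, IsIdealRel J → R.op.Sub J → Rupper.Sub J) :=
  statement6_general hC.hasStableSO R IX hIX IY hIY R1star hR1star R2co hR2co Rupper hRupper
    G1 hG1 G2 hG2
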